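/- For any ε ∈ (0,1), any α > 0 and any pair of distributions (P1,P2) on a finite alphabet X with V(P1,P2,α) > 0, there exist a constant C > 0 and an integer n0 such that for all n ≥ n0, | λ*(n,α,ε|P1,P2) − GJS(P1,P2,α) − sqrt(V(P1,P2,α)/n)·Φ^{-1}(ε) | ≤ C·(log n)/n. -/

import Mathlib

open Filter Topology MeasureTheory

namespace Classification

variable {X : Type*} [Fintype X] [DecidableEq X]

/-- `P` is a probability mass function on the finite alphabet `X`. -/
def IsDist (P : X → ℝ) : Prop := (∀ x, 0 ≤ P x) ∧ ∑ x, P x = 1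

/-- `P` has full support. -/
def FullSupport (P : X → ℝ) : Prop := ∀ x, 0 < P x

/-- Empirical distribution (type) of a sequence `x : Fin m → X`. -/
noncomputable def empDist {m : ℕ} (x : Fin m → X) : X → ℝ :=
  fun a => ((Finset.univ.filter fun i => x i = a).card : ℝ) / m

/-- Real-valued KL divergence with the usual `0 · log 0 = 0` convention. -/
noncomputable def klDivR (Q P : X → ℝ) : ℝ := ∑ x, Q x * Real.log (Q x / P x)

open Classical in
/-- Extended-real-valued KL divergence: `⊤` when `Q` is not absolutely continuous w.r.t. `P`. -/
noncomputable def klDivE (Q P : X → ℝ) : EReal :=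
  if ∀ x, P x = 0 → Q x = 0 then ((klDivR Q P : ℝ) : EReal) else ⊤

/-- The mixture `(α P1 + P2) / (1 + α)`. -/
noncomputable def mix (P1 P2 : X → ℝ) (α : ℝ) : X → ℝ :=
  fun x => (α * P1 x + P2 x) / (1 + α)

/-- Generalized Jensen–Shannon divergence
`GJS(P1,P2,α) = α D(P1 ‖ (αP1+P2)/(1+α)) + D(P2 ‖ (αP1+P2)/(1+α))`. -/
noncomputable def GJS (P1 P2 : X → ℝ) (α : ℝ) : ℝ :=
  α * klDivR P1 (mix P1 P2 α) + klDivR P2 (mix P1 P2 α)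

/-- Training sequence length `N = ⌈α n⌉`. -/
noncomputable def trainLen (α : ℝ) (n : ℕ) : ℕ := ⌈α * (n : ℝ)⌉₊

/-- Probability of observing the sequence `x` under i.i.d. sampling from `P`. -/
noncomputable def seqProb (P : X → ℝ) {m : ℕ} (x : Fin m → X) : ℝ := ∏ i, P (x i)

/-- A binary classification test: output `true` means "declare H₂",
`false` means "declare H₁". -/
abbrev BTest (X : Type*) (α : ℝ) (n : ℕ) : Type _ :=
  (Fin (trainLen α n) → X) → (Fin (trainLen α n) → X) → (Fin n → X) → Bool

/-- Type-I error probability: probability of declaring `H₂` when `Y^n ~ P1` (hypothesis H₁). -/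
noncomputable def beta1 {α : ℝ} {n : ℕ} (φ : BTest X α n) (P1 P2 : X → ℝ) : ℝ :=
  ∑ x1 : Fin (trainLen α n) → X, ∑ x2 : Fin (trainLen α n) → X, ∑ y : Fin n → X,
    if φ x1 x2 y = true then seqProb P1 x1 * seqProb P2 x2 * seqProb P1 y else 0

/-- Type-II error probability: probability of declaring `H₁` when `Y^n ~ P2` (hypothesis H₂). -/
noncomputable def beta2 {α : ℝ} {n : ℕ} (φ : BTest X α n) (P1 P2 : X → ℝ) : ℝ :=
  ∑ x1 : Fin (trainLen α n) → X, ∑ x2 : Fin (trainLen α n) → X, ∑ y : Fin n → X,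
    if φ x1 x2 y = false then seqProb P1 x1 * seqProb P2 x2 * seqProb P2 y else 0

open Classical in
/-- Gutman's test with threshold `lam`: declare `H₁` iff `GJS(T̂_{x₁}, T̂_y, α) ≤ lam`. -/
noncomputable def gutman (α lam : ℝ) (n : ℕ) : BTest X α n :=
  fun x1 _ y => if GJS (empDist x1) (empDist y) α ≤ lam then false else true

open Classical in
/-- `- log x` as an extended real, with `⊤` at `x = 0`. -/
noncomputable def negLogE (x : ℝ) : EReal :=
  if x = 0 then ⊤ else ((-Real.log x : ℝ) : EReal)

/-- Gutman's exponent function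
`F(P1,P2,α,lam) = min { α D(Q1‖P1) + D(Q2‖P2) : GJS(Q1,Q2,α) ≤ lam }` (as an inf in `EReal`). -/
noncomputable def Fexp (P1 P2 : X → ℝ) (α lam : ℝ) : EReal :=
  sInf {v : EReal | ∃ Q1 Q2 : X → ℝ, IsDist Q1 ∧ IsDist Q2 ∧ GJS Q1 Q2 α ≤ lam ∧
    v = (α : EReal) * klDivE Q1 P1 + klDivE Q2 P2}

/-- Expectation of `f` under `P`. -/
noncomputable def expect (P : X → ℝ) (f : X → ℝ) : ℝ := ∑ x, P x * f x

/-- Variance of `f` under `P`. -/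
noncomputable def varD (P : X → ℝ) (f : X → ℝ) : ℝ :=
  expect P (fun x => (f x - expect P f) ^ 2)

/-- Information density `ı₁(x) = log((1+α) P1(x) / (α P1(x) + P2(x)))`. -/
noncomputable def iDens1 (P1 P2 : X → ℝ) (α : ℝ) (x : X) : ℝ :=
  Real.log ((1 + α) * P1 x / (α * P1 x + P2 x))

/-- Information density `ı₂(x) = log((1+α) P2(x) / (α P1(x) + P2(x)))`. -/
noncomputable def iDens2 (P1 P2 : X → ℝ) (α : ℝ) (x : X) : ℝ :=
  Real.log ((1 + α) * P2 x / (α * P1 x + P2 x))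

/-- The dispersion `V(P1,P2,α) = α Var_{P1}[ı₁] + Var_{P2}[ı₂]`. -/
noncomputable def disp (P1 P2 : X → ℝ) (α : ℝ) : ℝ :=
  α * varD P1 (iDens1 P1 P2 α) + varD P2 (iDens2 P1 P2 α)

/-- The standard Gaussian cumulative distribution function `Φ`. -/
noncomputable def stdCDF (x : ℝ) : ℝ :=
  (Real.sqrt (2 * Real.pi))⁻¹ * ∫ t in Set.Iic x, Real.exp (-t ^ 2 / 2)

/-- The inverse standard Gaussian cdf `Φ⁻¹`. -/
noncomputable def stdCDFInv (p : ℝ) : ℝ := sInf {x : ℝ | p ≤ stdCDF x}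

/-- The non-asymptotic fundamental limit `λ*(n, α, ε | P1, P2)` for binary classification. -/
noncomputable def lamStar (α : ℝ) (n : ℕ) (ε : ℝ) (P1 P2 : X → ℝ) : ℝ :=
  sSup {lam : ℝ | 0 ≤ lam ∧ ∃ φ : BTest X α n,
    (∀ Q1 Q2 : X → ℝ, IsDist Q1 → IsDist Q2 →
      beta1 φ Q1 Q2 ≤ Real.exp (-((n : ℝ) * lam))) ∧
    beta2 φ P1 P2 ≤ ε}

/-- Rényi divergence of order `γ`. -/
noncomputable def renyi (γ : ℝ) (P1 P2 : X → ℝ) : ℝ :=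
  (1 / (γ - 1)) * Real.log (∑ x, P1 x ^ γ * P2 x ^ (1 - γ))

/-- The fundamental limit `τ*(n, α, ε | φ_n^Gut, P1, P2)` in the dual setting for Gutman's test. -/
noncomputable def tauStarGut (α : ℝ) (n : ℕ) (ε : ℝ) (P1 P2 : X → ℝ) : ℝ :=
  sSup {τ : ℝ | 0 ≤ τ ∧ ∃ lam : ℝ, 0 ≤ lam ∧
    (∀ Q1 Q2 : X → ℝ, IsDist Q1 → IsDist Q2 →
      beta1 (gutman α lam n) Q1 Q2 ≤ ε) ∧
    beta2 (gutman α lam n) P1 P2 ≤ Real.exp (-((n : ℝ) * τ))}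

/-- A two-sample homogeneity test: `true` means "declare H₂" (different distributions). -/
abbrev TTest (X : Type*) (α : ℝ) (n : ℕ) : Type _ :=
  (Fin (trainLen α n) → X) → (Fin n → X) → Bool

/-- False-alarm probability of a two-sample test. -/
noncomputable def betaFA {α : ℝ} {n : ℕ} (φ : TTest X α n) (P1 : X → ℝ) : ℝ :=
  ∑ x : Fin (trainLen α n) → X, ∑ y : Fin n → X,
    if φ x y = true then seqProb P1 x * seqProb P1 y else 0

/-- Miss-detection probability of a two-sample test. -/
noncomputable def betaMD {α : ℝ} {n : ℕ} (φ : TTest X α n) (P1 P2 : X → ℝ) : ℝ :=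
  ∑ x : Fin (trainLen α n) → X, ∑ y : Fin n → X,
    if φ x y = false then seqProb P1 x * seqProb P2 y else 0

/-- The fundamental limit `ξ*(n, α, ε | P1, P2)` for two-sample homogeneity testing. -/
noncomputable def xiStar (α : ℝ) (n : ℕ) (ε : ℝ) (P1 P2 : X → ℝ) : ℝ :=
  sSup {lam : ℝ | 0 ≤ lam ∧ ∃ φ : TTest X α n,
    (∀ Q1 : X → ℝ, IsDist Q1 → betaFA φ Q1 ≤ Real.exp (-((n : ℝ) * lam))) ∧
    betaMD φ P1 P2 ≤ ε}

/-- An M-ary classification test with the rejection option: `some j` means "declare H_j",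
`none` means "reject". -/
abbrev MTest (X : Type*) (M : ℕ) (α : ℝ) (n : ℕ) : Type _ :=
  (Fin M → Fin (trainLen α n) → X) → (Fin n → X) → Option (Fin M)

/-- Type-`j` error probability: probability of declaring some hypothesis other than
`H_j` or rejection, under `H_j`. -/
noncomputable def betaM {M : ℕ} {α : ℝ} {n : ℕ} (ψ : MTest X M α n)
    (P : Fin M → X → ℝ) (j : Fin M) : ℝ :=
  ∑ xs : Fin M → Fin (trainLen α n) → X, ∑ y : Fin n → X,
    if ψ xs y ≠ some j ∧ ψ xs y ≠ none then
      (∏ i, seqProb (P i) (xs i)) * seqProb (P j) y else 0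

/-- Type-`j` rejection probability: probability of rejecting under `H_j`. -/
noncomputable def zetaM {M : ℕ} {α : ℝ} {n : ℕ} (ψ : MTest X M α n)
    (P : Fin M → X → ℝ) (j : Fin M) : ℝ :=
  ∑ xs : Fin M → Fin (trainLen α n) → X, ∑ y : Fin n → X,
    if ψ xs y = none then (∏ i, seqProb (P i) (xs i)) * seqProb (P j) y else 0

/-- The fundamental limit `λ*(n, α, ε | P)` for M-ary classification with rejection. -/
noncomputable def lamStarM (M : ℕ) (α : ℝ) (n : ℕ) (ε : Fin M → ℝ)
    (P : Fin M → X → ℝ) : ℝ :=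
  sSup {lam : ℝ | 0 ≤ lam ∧ ∃ ψ : MTest X M α n,
    (∀ Q : Fin M → X → ℝ, (∀ i, IsDist (Q i)) → ∀ j,
      betaM ψ Q j ≤ Real.exp (-((n : ℝ) * lam))) ∧
    (∀ j, zetaM ψ P j ≤ ε j)}

open Classical in
/-- Gutman's M-ary test with rejection and threshold `lam`. -/
noncomputable def gutmanM (M : ℕ) [NeZero M] (α lam : ℝ) (n : ℕ) : MTest X M α n :=
  fun xs y =>
    if ∃ i k : Fin M, i ≠ k ∧ GJS (empDist (xs i)) (empDist y) α ≤ lam ∧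
        GJS (empDist (xs k)) (empDist y) α ≤ lam then none
    else if h : ∃ j : Fin M, GJS (empDist (xs j)) (empDist y) α ≤ lam then some h.choose
    else some 0

/-- The fundamental limit `τ*(n, α, ε | Ψ_n^Gut, P)` in the dual setting for
Gutman's M-ary test. -/
noncomputable def tauStarGutM (M : ℕ) [NeZero M] (α : ℝ) (n : ℕ) (ε : ℝ)
    (P : Fin M → X → ℝ) : ℝ :=
  sSup {τ : ℝ | 0 ≤ τ ∧ ∃ lam : ℝ, 0 ≤ lam ∧
    (∀ Q : Fin M → X → ℝ, (∀ i, IsDist (Q i)) → ∀ j,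
      betaM (gutmanM M α lam n) Q j ≤ ε) ∧
    (∀ j, zetaM (gutmanM M α lam n) P j ≤ Real.exp (-((n : ℝ) * τ)))}

/-- Generalized divergence of three distributions
`D_γ(P1,P2,P3) = (γ-1)⁻¹ log Σ_x P1(x)^{1-γ} P2(x)^{γ/2} P3(x)^{γ/2}`. -/
noncomputable def genDiv (γ : ℝ) (P1 P2 P3 : X → ℝ) : ℝ :=
  (1 / (γ - 1)) * Real.log (∑ x, P1 x ^ (1 - γ) * P2 x ^ (γ / 2) * P3 x ^ (γ / 2))

/-- A binary classification test with the rejection option: `some 0` means "declare H₁",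
`some 1` means "declare H₂", `none` means "reject". -/
abbrev RTest (X : Type*) (α : ℝ) (n : ℕ) : Type _ :=
  (Fin (trainLen α n) → X) → (Fin (trainLen α n) → X) → (Fin n → X) → Option (Fin 2)

/-- Type-1 error probability of a rejection test: declare `H₂` under `H₁`. -/
noncomputable def beta1R {α : ℝ} {n : ℕ} (ψ : RTest X α n) (P1 P2 : X → ℝ) : ℝ :=
  ∑ x1 : Fin (trainLen α n) → X, ∑ x2 : Fin (trainLen α n) → X, ∑ y : Fin n → X,
    if ψ x1 x2 y = some 1 then seqProb P1 x1 * seqProb P2 x2 * seqProb P1 y else 0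

/-- Type-2 error probability of a rejection test: declare `H₁` under `H₂`. -/
noncomputable def beta2R {α : ℝ} {n : ℕ} (ψ : RTest X α n) (P1 P2 : X → ℝ) : ℝ :=
  ∑ x1 : Fin (trainLen α n) → X, ∑ x2 : Fin (trainLen α n) → X, ∑ y : Fin n → X,
    if ψ x1 x2 y = some 0 then seqProb P1 x1 * seqProb P2 x2 * seqProb P2 y else 0

open Classical in
/-- Type-`j` rejection probability of a binary rejection test. -/
noncomputable def zetaR {α : ℝ} {n : ℕ} (ψ : RTest X α n) (P1 P2 : X → ℝ) (j : Fin 2) : ℝ :=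
  ∑ x1 : Fin (trainLen α n) → X, ∑ x2 : Fin (trainLen α n) → X, ∑ y : Fin n → X,
    if ψ x1 x2 y = none then
      seqProb P1 x1 * seqProb P2 x2 * seqProb (if j = 0 then P1 else P2) y else 0

/-- A binary test is type-based if it depends on the data only through the
triple of empirical distributions. -/
def TypeBasedB {α : ℝ} {n : ℕ} (φ : BTest X α n) : Prop :=
  ∀ x1 x1' x2 x2' : Fin (trainLen α n) → X, ∀ y y' : Fin n → X,
    empDist x1 = empDist x1' → empDist x2 = empDist x2' → empDist y = empDist y' →
      φ x1 x2 y = φ x1' x2' y'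

/-- An M-ary test is type-based if it depends on the data only through the
tuple of empirical distributions. -/
def TypeBasedM {M : ℕ} {α : ℝ} {n : ℕ} (ψ : MTest X M α n) : Prop :=
  ∀ xs xs' : Fin M → Fin (trainLen α n) → X, ∀ y y' : Fin n → X,
    (∀ i, empDist (xs i) = empDist (xs' i)) → empDist y = empDist y' →
      ψ xs y = ψ xs' y'

open Classical in
/-- Probability of an event under hypothesis `H₂` in the binary setup. -/
noncomputable def prH2E (α : ℝ) (n : ℕ) (P1 P2 : X → ℝ)
    (E : (Fin (trainLen α n) → X) → (Fin (trainLen α n) → X) → (Fin n → X) → Prop) : ℝ :=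
  ∑ x1 : Fin (trainLen α n) → X, ∑ x2 : Fin (trainLen α n) → X, ∑ y : Fin n → X,
    if E x1 x2 y then seqProb P1 x1 * seqProb P2 x2 * seqProb P2 y else 0

open Classical in
/-- Probability of an event under hypothesis `H_j` in the M-ary setup. -/
noncomputable def prHjM (M : ℕ) (α : ℝ) (n : ℕ) (P : Fin M → X → ℝ) (j : Fin M)
    (E : (Fin M → Fin (trainLen α n) → X) → (Fin n → X) → Prop) : ℝ :=
  ∑ xs : Fin M → Fin (trainLen α n) → X, ∑ y : Fin n → X,
    if E xs y then (∏ i, seqProb (P i) (xs i)) * seqProb (P j) y else 0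

/-- `η_n(α) = |X| log(n+1)/n + 2|X| log(1+αn)/(αn)`. -/
noncomputable def etaN (X : Type*) [Fintype X] (α : ℝ) (n : ℕ) : ℝ :=
  (Fintype.card X : ℝ) * Real.log ((n : ℝ) + 1) / n +
    2 * (Fintype.card X : ℝ) * Real.log (1 + α * n) / (α * n)

/-- `η_{n,M} = M |X| log(nα+1)/(nα) + |X| log(n+1)/n`. -/
noncomputable def etaNM (X : Type*) [Fintype X] (M : ℕ) (α : ℝ) (n : ℕ) : ℝ :=
  (M : ℝ) * (Fintype.card X : ℝ) * Real.log ((n : ℝ) * α + 1) / ((n : ℝ) * α) +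
    (Fintype.card X : ℝ) * Real.log ((n : ℝ) + 1) / n

/-- `Q` is an `m`-type: the empirical distribution of some sequence of length `m`. -/
def IsTypeDist (m : ℕ) (Q : X → ℝ) : Prop := ∃ x : Fin m → X, empDist x = Q

/-- The type-restricted exponent function `F_n`. -/
noncomputable def Fn (n : ℕ) (P1 P2 : X → ℝ) (α lam : ℝ) : ℝ :=
  sInf {v : ℝ | ∃ Q1 Q2 : X → ℝ, IsTypeDist (trainLen α n) Q1 ∧ IsTypeDist n Q2 ∧
    GJS Q1 Q2 α ≤ lam ∧ v = α * klDivR Q1 P1 + klDivR Q2 P2}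

/-- The second smallest value of a finite family of reals:
`min_{i ≠ j} max (v i) (v j)`. -/
noncomputable def secondMin {M : ℕ} (v : Fin M → ℝ) : ℝ :=
  sInf {t : ℝ | ∃ i j : Fin M, i ≠ j ∧ t = max (v i) (v j)}

/-- The tilted distribution `P^{(γ)}` with `γ = α/(1+α)`. -/
noncomputable def tilt (α : ℝ) (P1 P2 : X → ℝ) : X → ℝ :=
  fun x => P1 x ^ (α / (1 + α)) * P2 x ^ (1 / (1 + α)) /
    ∑ a, P1 a ^ (α / (1 + α)) * P2 a ^ (1 / (1 + α))



/-- Standard Gaussian density. -/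
noncomputable def gpdf (x : ℝ) : ℝ := (Real.sqrt (2 * Real.pi))⁻¹ * Real.exp (-x ^ 2 / 2)

lemma gpdf_pos (x : ℝ) : 0 < gpdf x := by unfold gpdf; positivity

lemma gpdf_eq : gpdf = ProbabilityTheory.gaussianPDFReal 0 1 := by
  rw [ProbabilityTheory.gaussianPDFReal_def]
  ext x; simp [gpdf]

lemma gpdf_cont : Continuous gpdf := by unfold gpdf; fun_prop

lemma gpdf_integrable : Integrable gpdf := by
  rw [gpdf_eq]; exact ProbabilityTheory.integrable_gaussianPDFReal 0 1

lemma stdCDF_eq (x : ℝ) : stdCDF x = ∫ t in Set.Iic x, gpdf t := by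
  unfold stdCDF gpdf; rw [integral_const_mul]

lemma stdCDF_cdf (x : ℝ) : stdCDF x = ProbabilityTheory.cdf (ProbabilityTheory.gaussianReal 0 1) x := by
  rw [ProbabilityTheory.cdf_eq_real, Measure.real,
    ProbabilityTheory.gaussianReal_apply_eq_integral _ one_ne_zero, ← gpdf_eq, ← stdCDF_eq,
    ENNReal.toReal_ofReal]
  rw [stdCDF_eq]
  exact setIntegral_nonneg measurableSet_Iic fun t _ => (gpdf_pos t).le

lemma stdCDF_nonneg (x : ℝ) : 0 ≤ stdCDF x := by
  rw [stdCDF_cdf]; exact ProbabilityTheory.cdf_nonneg _ _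

lemma stdCDF_le_one (x : ℝ) : stdCDF x ≤ 1 := by
  rw [stdCDF_cdf]; exact ProbabilityTheory.cdf_le_one _ _

lemma stdCDF_mono : Monotone stdCDF := by
  intro a b h
  rw [stdCDF_cdf, stdCDF_cdf]; exact ProbabilityTheory.monotone_cdf _ h

lemma stdCDF_sub (a b : ℝ) : stdCDF b - stdCDF a = ∫ t in a..b, gpdf t := by
  rw [stdCDF_eq, stdCDF_eq]
  exact intervalIntegral.integral_Iic_sub_Iic gpdf_integrable.integrableOn
    gpdf_integrable.integrableOn

lemma stdCDF_deriv (x : ℝ) : HasDerivAt stdCDF (gpdf x) x := by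
  have h : stdCDF = fun u => (∫ t in (0:ℝ)..u, gpdf t) + stdCDF 0 := by
    ext u; rw [← stdCDF_sub]; ring
  rw [h]
  apply HasDerivAt.add_const
  exact intervalIntegral.integral_hasDerivAt_right (gpdf_cont.intervalIntegrable _ _)
    (gpdf_cont.stronglyMeasurableAtFilter _ _) gpdf_cont.continuousAt

lemma stdCDF_cont : Continuous stdCDF :=
  continuous_iff_continuousAt.2 fun x => (stdCDF_deriv x).continuousAt

lemma stdCDF_inv {ε : ℝ} (hε : ε ∈ Set.Ioo (0 : ℝ) 1) : stdCDF (stdCDFInv ε) = ε := by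
  have hbot : Tendsto stdCDF atBot (𝓝 0) := by
    rw [funext stdCDF_cdf]; exact ProbabilityTheory.tendsto_cdf_atBot _
  have htop : Tendsto stdCDF atTop (𝓝 1) := by
    rw [funext stdCDF_cdf]; exact ProbabilityTheory.tendsto_cdf_atTop _
  obtain ⟨a, ha⟩ := (hbot.eventually (gt_mem_nhds hε.1)).exists
  obtain ⟨b, hb⟩ := (htop.eventually (lt_mem_nhds hε.2)).exists
  have hbdd : BddBelow {x : ℝ | ε ≤ stdCDF x} := by
    refine ⟨a, fun x hx => ?_⟩
    by_contra h
    have := stdCDF_mono (not_le.1 h).le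
    have hx' : ε ≤ stdCDF x := hx
    linarith
  have hne : {x : ℝ | ε ≤ stdCDF x}.Nonempty := ⟨b, hb.le⟩
  have hcl : IsClosed {x : ℝ | ε ≤ stdCDF x} := isClosed_le continuous_const stdCDF_cont
  have hmem : ε ≤ stdCDF (stdCDFInv ε) := hcl.csInf_mem hne hbdd
  refine le_antisymm ?_ hmem
  have hlt : ∀ x < stdCDFInv ε, stdCDF x ≤ ε := by
    intro x hx
    by_contra h
    exact absurd (csInf_le hbdd (not_le.1 h).le) (not_le.2 hx)
  have ht : Tendsto stdCDF (𝓝[<] (stdCDFInv ε)) (𝓝 (stdCDF (stdCDFInv ε))) :=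
    (stdCDF_cont.tendsto _).mono_left nhdsWithin_le_nhds
  refine le_of_tendsto ht ?_
  filter_upwards [self_mem_nhdsWithin] with x hx using hlt x hx

lemma gpdf_deriv (x : ℝ) : HasDerivAt gpdf (-x * gpdf x) x := by
  unfold gpdf
  have h1 : HasDerivAt (fun x : ℝ => -x ^ 2 / 2) (-x) x := by
    have := ((hasDerivAt_pow 2 x).neg).div_const 2
    exact this.congr_deriv (by norm_num; ring)
  exact ((h1.exp).const_mul (Real.sqrt (2 * Real.pi))⁻¹).congr_deriv (by ring)

lemma gpdf_neg (x : ℝ) : gpdf (-x) = gpdf x := by simp [gpdf]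

lemma stdCDF_neg (x : ℝ) : stdCDF (-x) = 1 - stdCDF x := by
  have h1 : (∫ t in Set.Iic x, gpdf t) + ∫ t in Set.Ioi x, gpdf t = ∫ t, gpdf t := by
    rw [← Set.compl_Iic]
    exact integral_add_compl measurableSet_Iic gpdf_integrable
  have h2 : ∫ t, gpdf t = 1 := by
    rw [gpdf_eq]; exact ProbabilityTheory.integral_gaussianPDFReal_eq_one 0 one_ne_zero
  have h3 := integral_comp_neg_Iic (-x) gpdf
  simp only [gpdf_neg, neg_neg] at h3
  rw [stdCDF_eq, stdCDF_eq, h3]; linarith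

lemma mills_neg {w : ℝ} (hw : w ≤ 0) : -w * stdCDF w ≤ gpdf w := by
  -- monotonicity of gpdf w + w * Φ w
  have hder : ∀ x, HasDerivAt (fun x => gpdf x + x * stdCDF x) (stdCDF x) x := by
    intro x
    exact ((gpdf_deriv x).add ((hasDerivAt_id x).mul (stdCDF_deriv x))).congr_deriv (by simp)
  have hmono : Monotone (fun x => gpdf x + x * stdCDF x) := by
    apply monotone_of_hasDerivAt_nonneg (f' := stdCDF) (fun x => hder x)
    intro x; exact stdCDF_nonneg x
  have hint : -w * stdCDF w ≤ gpdf w := by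
    have e1 : IntegrableOn (fun t => -t * gpdf t) (Set.Iic w) := by
      have := (integrable_mul_exp_neg_mul_sq (b := 1/2) (by norm_num)).const_mul
        (-(Real.sqrt (2 * Real.pi))⁻¹)
      refine (this.congr (ae_of_all _ fun t => ?_)).integrableOn
      simp only [gpdf]
      have : -(1/2) * t^2 = -t^2/2 := by ring
      rw [this]; ring
    have e2 : Tendsto gpdf atBot (𝓝 0) := by
      unfold gpdf
      rw [show (0:ℝ) = (Real.sqrt (2 * Real.pi))⁻¹ * 0 by simp]
      apply Tendsto.const_mul
      apply Real.tendsto_exp_atBot.comp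
      have : Tendsto (fun x : ℝ => x ^ 2) atBot atTop := by
        have := (tendsto_pow_atTop (α := ℝ) (two_ne_zero)).comp tendsto_neg_atBot_atTop
        refine this.congr fun x => ?_
        simp
      have h3 := (tendsto_neg_atTop_atBot.comp this).atBot_div_const (r := 2) (by norm_num)
      exact h3
    have := integral_Iic_of_hasDerivAt_of_tendsto (f := gpdf) (f' := fun t => -t * gpdf t)
      (a := w) gpdf_cont.continuousWithinAt (fun x _ => gpdf_deriv x) e1 e2
    rw [sub_zero] at this
    rw [← this, stdCDF_eq, ← integral_const_mul]
    apply setIntegral_mono_on (gpdf_integrable.integrableOn.const_mul _) e1 measurableSet_Iic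
    intro t ht
    have : t ≤ w := ht
    have := (gpdf_pos t).le
    nlinarith
  exact hint

lemma gpdf_ge {w : ℝ} (h : |w| ≤ 1) : gpdf 1 ≤ gpdf w := by
  unfold gpdf
  have : w ^ 2 ≤ 1 := by rw [← sq_abs]; nlinarith [abs_nonneg w]
  have h2 : -1 ^ 2 / 2 ≤ -w ^ 2 / 2 := by linarith
  exact mul_le_mul_of_nonneg_left (Real.exp_le_exp.2 h2) (by positivity)

lemma gpdf_one_lt : gpdf 1 ≤ 1 := by
  unfold gpdf
  have h1 : 1 ≤ Real.sqrt (2 * Real.pi) := by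
    rw [Real.one_le_sqrt]; nlinarith [Real.pi_gt_three]
  have h2 : Real.exp (-1 ^ 2 / 2) ≤ 1 := by
    rw [Real.exp_le_one_iff]; norm_num
  have h3 : (Real.sqrt (2 * Real.pi))⁻¹ ≤ 1 := inv_le_one_of_one_le₀ h1
  calc _ ≤ (1:ℝ) * 1 := by gcongr
    _ = 1 := by norm_num

lemma mills_neg' {w : ℝ} (hw : w ≤ 0) : stdCDF w ≤ (gpdf 1)⁻¹ * gpdf w := by
  have hp := gpdf_pos 1
  have h1 : (1:ℝ) ≤ (gpdf 1)⁻¹ := (one_le_inv₀ hp).2 gpdf_one_lt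
  by_cases h : w ≤ -1
  · have := mills_neg hw
    have h0 := stdCDF_nonneg w
    have := (gpdf_pos w)
    nlinarith
  · have h2 : gpdf 1 ≤ gpdf w := gpdf_ge (abs_le.2 ⟨by linarith, by linarith⟩)
    calc stdCDF w ≤ 1 := stdCDF_le_one w
      _ = (gpdf 1)⁻¹ * gpdf 1 := by field_simp
      _ ≤ _ := by gcongr

/-- Stein solution. -/
noncomputable def stein (z w : ℝ) : ℝ := (stdCDF (min w z) - stdCDF w * stdCDF z) / gpdf w

lemma stein_nonneg (z w : ℝ) : 0 ≤ stein z w := by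
  apply div_nonneg _ (gpdf_pos w).le
  rcases le_total w z with h | h
  · rw [min_eq_left h]; nlinarith [stdCDF_nonneg w, stdCDF_le_one z]
  · rw [min_eq_right h]; nlinarith [stdCDF_nonneg z, stdCDF_le_one w]

lemma stein_le1 (z w : ℝ) : stein z w ≤ stdCDF w / gpdf w := by
  unfold stein
  have := (gpdf_pos w)
  have h2 := stdCDF_mono (min_le_left w z)
  have h3 := mul_nonneg (stdCDF_nonneg w) (stdCDF_nonneg z)
  gcongr
  linarith

lemma stein_le2 (z w : ℝ) : stein z w ≤ stdCDF (-w) / gpdf w := by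
  unfold stein
  have := (gpdf_pos w)
  rw [stdCDF_neg]
  have h2 := stdCDF_mono (min_le_right w z)
  have h3 := mul_nonneg (stdCDF_nonneg w) (stdCDF_nonneg z)
  refine div_le_div_of_nonneg_right ?_ this.le
  nlinarith [stdCDF_nonneg z, stdCDF_le_one w, stdCDF_le_one z]

lemma stein_le (z w : ℝ) : stein z w ≤ (gpdf 1)⁻¹ := by
  rcases le_total w 0 with h | h
  · refine (stein_le1 z w).trans ?_
    rw [div_le_iff₀ (gpdf_pos w)]
    exact mills_neg' h
  · refine (stein_le2 z w).trans ?_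
    rw [div_le_iff₀ (gpdf_pos w), ← gpdf_neg w]
    exact mills_neg' (by linarith)

lemma stein_mul_le (z w : ℝ) : |w * stein z w| ≤ 1 := by
  rw [abs_mul, abs_of_nonneg (stein_nonneg z w)]
  rcases le_total w 0 with h | h
  · rw [abs_of_nonpos h]
    calc -w * stein z w ≤ -w * (stdCDF w / gpdf w) := by
          gcongr; linarith; exact stein_le1 z w
      _ = (-w * stdCDF w) / gpdf w := by ring
      _ ≤ 1 := by rw [div_le_one (gpdf_pos w)]; exact mills_neg h
  · rw [abs_of_nonneg h]
    calc w * stein z w ≤ w * (stdCDF (-w) / gpdf w) := by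
          gcongr; exact stein_le2 z w
      _ = (- -w * stdCDF (-w)) / gpdf w := by ring
      _ ≤ 1 := by
        rw [div_le_one (gpdf_pos w), ← gpdf_neg w]; exact mills_neg (by linarith)

lemma stein_cont (z : ℝ) : Continuous (stein z) := by
  unfold stein
  have h1 := stdCDF_cont
  have h2 := gpdf_cont
  refine Continuous.div (by fun_prop) h2 (fun w => (gpdf_pos w).ne')

/-- Right derivative of the Stein solution. -/
noncomputable def steinD (z w : ℝ) : ℝ :=
  w * stein z w + (if w < z then 1 else 0) - stdCDF z

lemma steinD_meas (z : ℝ) : Measurable (steinD z) := by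
  unfold steinD
  refine Measurable.sub_const (Measurable.add ?_ ?_) _
  · exact (continuous_id.mul (stein_cont z)).measurable
  · exact Measurable.ite measurableSet_Iio measurable_const measurable_const

lemma stein_deriv (z w : ℝ) : HasDerivWithinAt (stein z) (steinD z w) (Set.Ici w) w := by
  have hp := (gpdf_pos w).ne'
  by_cases h : w < z
  · have h1 : HasDerivAt (fun w => (stdCDF w - stdCDF w * stdCDF z) / gpdf w) (steinD z w) w := by
      refine (((stdCDF_deriv w).sub ((stdCDF_deriv w).mul_const (stdCDF z))).div
        (gpdf_deriv w) hp).congr_deriv ?_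
      simp only [steinD, stein, h, if_true, min_eq_left h.le]
      simp only [Pi.sub_apply]
      field_simp
      ring
    refine (h1.congr_of_eventuallyEq ?_).hasDerivWithinAt
    filter_upwards [gt_mem_nhds h] with x hx
    simp [stein, min_eq_left (le_of_lt hx)]
  · have h' := not_lt.1 h
    have h1 : HasDerivAt (fun w => (stdCDF z - stdCDF w * stdCDF z) / gpdf w) (steinD z w) w := by
      refine (((hasDerivAt_const w (stdCDF z)).sub
        ((stdCDF_deriv w).mul_const (stdCDF z))).div (gpdf_deriv w) hp).congr_deriv ?_
      simp only [steinD, stein, h, if_false, min_eq_right h']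
      simp only [Pi.sub_apply]
      field_simp
      ring
    refine h1.hasDerivWithinAt.congr (fun x hx => ?_) ?_
    · have : z ≤ x := h'.trans hx
      simp [stein, min_eq_right this]
    · simp [stein, min_eq_right h']

lemma steinD_bound (z w : ℝ) : |steinD z w| ≤ 2 := by
  have h1 := abs_le.1 (stein_mul_le z w)
  have h2 := stdCDF_nonneg z
  have h3 := stdCDF_le_one z
  unfold steinD
  rw [abs_le]
  split_ifs <;> constructor <;> linarith

lemma rightMVT {f f' : ℝ → ℝ} (hf : Continuous f)
    (hd : ∀ x, HasDerivWithinAt f (f' x) (Set.Ici x) x) {B a b : ℝ}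
    (hB : ∀ x ∈ Set.uIcc a b, |f' x| ≤ B) : |f b - f a| ≤ B * |b - a| := by
  rcases le_total a b with h | h
  · rw [Set.uIcc_of_le h] at hB
    have := norm_image_sub_le_of_norm_deriv_right_le_segment (f := f) (f' := f') (C := B)
      hf.continuousOn (fun x _ => hd x) (fun x hx => hB x (Set.Ico_subset_Icc_self hx)) b ⟨h, le_rfl⟩
    rw [abs_of_nonneg (sub_nonneg.2 h)]; exact this
  · rw [Set.uIcc_of_ge h] at hB
    have := norm_image_sub_le_of_norm_deriv_right_le_segment (f := f) (f' := f') (C := B)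
      hf.continuousOn (fun x _ => hd x) (fun x hx => hB x (Set.Ico_subset_Icc_self hx)) a ⟨h, le_rfl⟩
    rw [abs_sub_comm, abs_sub_comm b a, abs_of_nonneg (sub_nonneg.2 h)]; exact this

lemma stein_lip (z a b : ℝ) : |stein z b - stein z a| ≤ 2 * |b - a| :=
  rightMVT (stein_cont z) (stein_deriv z) fun x _ => steinD_bound z x

/-- Modulus for the Stein derivative. -/
noncomputable def smod (z δ w : ℝ) : ℝ :=
  δ * ((gpdf 1)⁻¹ + 2 * |w|) + (if |w - z| ≤ δ then 1 else 0)

lemma steinD_diff (z : ℝ) {δ w s : ℝ} (h : |s - w| ≤ δ) :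
    |steinD z s - steinD z w| ≤ smod z δ w := by
  have h1 : |s * stein z s - w * stein z w| ≤ δ * ((gpdf 1)⁻¹ + 2 * |w|) := by
    have : s * stein z s - w * stein z w = (s - w) * stein z s + w * (stein z s - stein z w) := by
      ring
    rw [this]
    refine (abs_add_le _ _).trans ?_
    rw [abs_mul, abs_mul, abs_of_nonneg (stein_nonneg z s), mul_add]
    have a1 := stein_le z s
    have a2 := stein_lip z w s
    have a0 := stein_nonneg z s
    have : 0 ≤ δ := (abs_nonneg _).trans h
    have a3 : |s - w| * stein z s ≤ δ * (gpdf 1)⁻¹ := by gcongr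
    have a4 : |w| * |stein z s - stein z w| ≤ |w| * (2 * δ) := by
      gcongr; linarith
    linarith
  have h2 : |(if s < z then (1:ℝ) else 0) - (if w < z then 1 else 0)| ≤
      (if |w - z| ≤ δ then 1 else 0) := by
    have h := abs_le.1 h
    by_cases c1 : s < z <;> by_cases c2 : w < z
    · simp [c1, c2]; positivity
    · have : |w - z| ≤ δ := abs_le.2 ⟨by linarith, by linarith⟩
      simp [c1, c2, this]
    · have : |w - z| ≤ δ := abs_le.2 ⟨by linarith, by linarith⟩
      simp [c1, c2, this]
    · simp [c1, c2]; positivity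
  unfold smod steinD
  calc _ = |(s * stein z s - w * stein z w) + ((if s < z then (1:ℝ) else 0) - (if w < z then 1 else 0))| := by
        congr 1; ring
    _ ≤ _ := (abs_add_le _ _).trans (add_le_add h1 h2)

lemma stein_taylor (z : ℝ) {δ w t : ℝ} (h : |t| ≤ δ) :
    |stein z (w + t) - stein z w - t * steinD z w| ≤ |t| * smod z δ w := by
  have hd : ∀ x, HasDerivWithinAt (fun s => stein z s - s * steinD z w)
      (steinD z x - steinD z w) (Set.Ici x) x := by
    intro x
    have := (stein_deriv z x).sub ((hasDerivWithinAt_id x (Set.Ici x)).mul_const (steinD z w))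
    exact this.congr_deriv (by simp)
  have hc : Continuous (fun s => stein z s - s * steinD z w) := by
    have := stein_cont z
    fun_prop
  have := rightMVT hc hd (B := smod z δ w) (a := w) (b := w + t) (by
    intro x hx
    apply steinD_diff
    have := Set.abs_sub_left_of_mem_uIcc hx
    simp at this
    exact this.trans h)
  calc _ = |stein z (w + t) - (w + t) * steinD z w - (stein z w - w * steinD z w)| := by
        congr 1; ring
    _ ≤ _ := this
    _ = _ := by rw [add_sub_cancel_left]; ring

section BE

variable {Ω ι : Type*} [Finite Ω] [MeasurableSpace Ω] [DiscreteMeasurableSpace Ω] [Fintype ι]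
  {μ : Measure Ω} [IsProbabilityMeasure μ] {ξ : ι → Ω → ℝ}

lemma intOK (f : Ω → ℝ) : Integrable f μ := Integrable.of_finite

lemma be_indep (hind : ProbabilityTheory.iIndepFun ξ μ) (i : ι) {F G : ℝ → ℝ}
    (hF : Measurable F) (hG : Measurable G) :
    ∫ ω, G (ξ i ω) * F ((∑ j, ξ j ω) - ξ i ω) ∂μ =
      (∫ ω, G (ξ i ω) ∂μ) * ∫ ω, F ((∑ j, ξ j ω) - ξ i ω) ∂μ := by
  classical
  have h1 := hind.indepFun_finsetSum_of_notMem (fun i => .of_discrete)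
    (s := Finset.univ.erase i) (i := i) (by simp)
  have h2 := (h1.comp hF hG).symm
  have h3 : ∀ ω, (∑ j ∈ Finset.univ.erase i, ξ j) ω = (∑ j, ξ j ω) - ξ i ω := by
    intro ω
    rw [Finset.sum_apply, ← Finset.sum_erase_add _ _ (Finset.mem_univ i)]
    ring
  have := h2.integral_fun_mul_eq_mul_integral
    (Measurable.of_discrete.aestronglyMeasurable) (Measurable.of_discrete.aestronglyMeasurable)
  simp only [Function.comp_apply, h3] at this
  exact this

lemma be_mul (hind : ProbabilityTheory.iIndepFun ξ μ) (hm : ∀ i, ∫ ω, ξ i ω ∂μ = 0)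
    {k : ℝ → ℝ} (hk : Measurable k) :
    ∫ ω, (∑ j, ξ j ω) * k (∑ j, ξ j ω) ∂μ =
      ∑ i, ∫ ω, ξ i ω * (k (∑ j, ξ j ω) - k ((∑ j, ξ j ω) - ξ i ω)) ∂μ := by
  simp_rw [Finset.sum_mul, mul_sub]
  rw [integral_finsetSum _ (fun i _ => intOK _)]
  refine Finset.sum_congr rfl fun i _ => ?_
  rw [integral_sub (intOK _) (intOK _)]
  have := be_indep hind i hk measurable_id
  simp only [id] at this
  rw [this, hm i]; simp

lemma be_sq (hind : ProbabilityTheory.iIndepFun ξ μ) (hm : ∀ i, ∫ ω, ξ i ω ∂μ = 0)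
    (hv : ∑ i, ∫ ω, ξ i ω ^ 2 ∂μ = 1) : ∫ ω, |∑ j, ξ j ω| ∂μ ≤ 1 := by
  have h := be_mul hind hm (k := id) measurable_id
  simp only [id, sub_sub_cancel, ← pow_two] at h
  rw [hv] at h
  have h2 : ∫ ω, |∑ j, ξ j ω| ∂μ ≤ ∫ ω, (1 / 2 + (∑ j, ξ j ω) ^ 2 / 2) ∂μ := by
    apply integral_mono (intOK _) (intOK _)
    intro ω
    have := sq_nonneg (|∑ j, ξ j ω| - 1)
    have h3 := sq_abs (∑ j, ξ j ω)
    simp only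
    nlinarith
  rw [integral_add (intOK _) (intOK _), integral_div _ (fun ω => (∑ j, ξ j ω) ^ 2), h] at h2
  simp at h2
  linarith

lemma be_conc (hind : ProbabilityTheory.iIndepFun ξ μ) (hm : ∀ i, ∫ ω, ξ i ω ∂μ = 0)
    (hv : ∑ i, ∫ ω, ξ i ω ^ 2 ∂μ = 1) {δ : ℝ} (hδ0 : 0 ≤ δ) (hδ : ∀ i ω, |ξ i ω| ≤ δ)
    (z : ℝ) {r : ℝ} (hr : 0 ≤ r) :
    ∫ ω, (if |(∑ j, ξ j ω) - z| ≤ r then (1:ℝ) else 0) ∂μ ≤ r + 2 * δ := by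
  set R := r + 2 * δ with hR
  set k : ℝ → ℝ := fun w => max (-R) (min R (w - z)) with hk
  have hR0 : 0 ≤ R := by positivity
  have hkm : Measurable k := by fun_prop
  have hkb : ∀ w, |k w| ≤ R := by
    intro w
    rw [abs_le]
    exact ⟨le_max_left _ _, max_le (by linarith) (min_le_left _ _)⟩
  have hkmono : Monotone k := by
    intro a b hab
    exact max_le_max le_rfl (min_le_min le_rfl (by linarith))
  have hpt : ∀ w x : ℝ, |x| ≤ δ →
      x ^ 2 * (if |(w - x) - z| ≤ r + δ then (1:ℝ) else 0) ≤ x * (k w - k (w - x)) := by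
    intro w x hx
    have hx' := abs_le.1 hx
    split_ifs with h
    · have h' := abs_le.1 h
      have e1 : k w = w - z := by
        simp only [hk]
        rw [min_eq_right (by linarith), max_eq_right (by linarith)]
      have e2 : k (w - x) = w - x - z := by
        simp only [hk]
        rw [min_eq_right (by linarith), max_eq_right (by linarith)]
      rw [e1, e2]; apply le_of_eq; ring
    · rw [mul_zero]
      rcases le_total 0 x with h0 | h0
      · exact mul_nonneg h0 (sub_nonneg.2 (hkmono (by linarith)))
      · exact mul_nonneg_of_nonpos_of_nonpos h0 (sub_nonpos.2 (hkmono (by linarith)))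
  have hmeas : Measurable (fun w : ℝ => if |w - z| ≤ r + δ then (1:ℝ) else 0) :=
    Measurable.ite (measurableSet_le (by fun_prop) (by fun_prop)) measurable_const measurable_const
  have h1 : ∫ ω, (∑ j, ξ j ω) * k (∑ j, ξ j ω) ∂μ ≤ R := by
    calc _ ≤ ∫ ω, R * |∑ j, ξ j ω| ∂μ := by
          apply integral_mono (intOK _) (intOK _)
          intro ω
          simp only
          refine (le_abs_self _).trans ?_
          rw [abs_mul, mul_comm]
          gcongr
          exact hkb _
      _ = R * ∫ ω, |∑ j, ξ j ω| ∂μ := integral_const_mul _ _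
      _ ≤ R * 1 := by gcongr; exact be_sq hind hm hv
      _ = R := mul_one R
  refine le_trans ?_ h1
  rw [be_mul hind hm hkm]
  have key : ∀ p : ℝ, p = ∑ i, (∫ ω, ξ i ω ^ 2 ∂μ) * p := fun p => by
    rw [← Finset.sum_mul, hv, one_mul]
  rw [key (∫ ω, (if |(∑ j, ξ j ω) - z| ≤ r then (1:ℝ) else 0) ∂μ)]
  refine Finset.sum_le_sum fun i _ => ?_
  calc _ ≤ (∫ ω, ξ i ω ^ 2 ∂μ) *
        ∫ ω, (if |((∑ j, ξ j ω) - ξ i ω) - z| ≤ r + δ then (1:ℝ) else 0) ∂μ := by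
        apply mul_le_mul_of_nonneg_left _ (integral_nonneg fun ω => sq_nonneg _)
        apply integral_mono (intOK _) (intOK _)
        intro ω
        simp only
        have hx' := abs_le.1 (hδ i ω)
        by_cases hc : |(∑ j, ξ j ω) - z| ≤ r
        · have h' := abs_le.1 hc
          rw [if_pos hc, if_pos (abs_le.2 ⟨by linarith, by linarith⟩)]
        · rw [if_neg hc]; positivity
    _ = ∫ ω, ξ i ω ^ 2 * (if |((∑ j, ξ j ω) - ξ i ω) - z| ≤ r + δ then (1:ℝ) else 0) ∂μ :=
        (be_indep hind i hmeas (G := fun x => x ^ 2) (by fun_prop)).symm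
    _ ≤ _ := by
        apply integral_mono (intOK _) (intOK _)
        intro ω
        exact hpt _ _ (hδ i ω)

/-- Berry--Esseen for bounded summands, via Stein's method. -/
lemma berry_esseen (hind : ProbabilityTheory.iIndepFun ξ μ) (hm : ∀ i, ∫ ω, ξ i ω ∂μ = 0)
    (hv : ∑ i, ∫ ω, ξ i ω ^ 2 ∂μ = 1) {δ : ℝ} (hδ0 : 0 ≤ δ) (hδ1 : δ ≤ 1)
    (hδ : ∀ i ω, |ξ i ω| ≤ δ) (z : ℝ) :
    |∫ ω, (if (∑ j, ξ j ω) < z then (1:ℝ) else 0) ∂μ - stdCDF z| ≤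
      2 * ((gpdf 1)⁻¹ + 8) * δ := by
  set c := (gpdf 1)⁻¹ with hc
  have hmod : ∀ i, ∫ ω, smod z δ ((∑ j, ξ j ω) - ξ i ω) ∂μ ≤ (c + 8) * δ := by
    intro i
    have hp : ∀ ω, smod z δ ((∑ j, ξ j ω) - ξ i ω) ≤
        δ * (c + 2) + 2 * δ * |∑ j, ξ j ω| + (if |(∑ j, ξ j ω) - z| ≤ 2 * δ then (1:ℝ) else 0) := by
      intro ω
      unfold smod
      have hx := hδ i ω
      have hx' := abs_le.1 hx
      have a1 : |(∑ j, ξ j ω) - ξ i ω| ≤ |∑ j, ξ j ω| + 1 :=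
        (abs_sub _ _).trans (by linarith)
      have a2 : δ * (c + 2 * |(∑ j, ξ j ω) - ξ i ω|) ≤ δ * (c + 2 * (|∑ j, ξ j ω| + 1)) := by
        gcongr
      have a3 : (if |(∑ j, ξ j ω) - ξ i ω - z| ≤ δ then (1:ℝ) else 0) ≤
          (if |(∑ j, ξ j ω) - z| ≤ 2 * δ then (1:ℝ) else 0) := by
        by_cases hc : |(∑ j, ξ j ω) - ξ i ω - z| ≤ δ
        · have h' := abs_le.1 hc
          rw [if_pos hc, if_pos (abs_le.2 ⟨by linarith, by linarith⟩)]
        · rw [if_neg hc]; positivity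
      linarith
    calc _ ≤ ∫ ω, (δ * (c + 2) + 2 * δ * |∑ j, ξ j ω| +
          (if |(∑ j, ξ j ω) - z| ≤ 2 * δ then (1:ℝ) else 0)) ∂μ :=
          integral_mono (intOK _) (intOK _) hp
      _ = δ * (c + 2) + 2 * δ * ∫ ω, |∑ j, ξ j ω| ∂μ +
          ∫ ω, (if |(∑ j, ξ j ω) - z| ≤ 2 * δ then (1:ℝ) else 0) ∂μ := by
          rw [integral_add (intOK _) (intOK _), integral_add (intOK _) (intOK _),
            integral_const_mul _ (fun ω => |∑ j, ξ j ω|)]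
          simp
      _ ≤ δ * (c + 2) + 2 * δ * 1 + (2 * δ + 2 * δ) := by
          gcongr
          · exact be_sq hind hm hv
          · exact be_conc hind hm hv hδ0 hδ z (by positivity)
      _ = _ := by ring
  have hmm : Measurable (smod z δ) := by
    unfold smod
    refine Measurable.add (by fun_prop) ?_
    exact Measurable.ite (measurableSet_le (by fun_prop) (by fun_prop)) measurable_const
      measurable_const
  have hI : ∫ ω, (if (∑ j, ξ j ω) < z then (1:ℝ) else 0) ∂μ - stdCDF z =
      ∫ ω, steinD z (∑ j, ξ j ω) ∂μ - ∫ ω, (∑ j, ξ j ω) * stein z (∑ j, ξ j ω) ∂μ := by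
    unfold steinD
    rw [integral_sub (intOK _) (intOK _), integral_add (intOK _) (intOK _)]
    simp only [integral_const, probReal_univ, one_smul]
    ring
  rw [hI, be_mul hind hm (stein_cont z).measurable]
  have key : ∀ p : ℝ, p = ∑ i, (∫ ω, ξ i ω ^ 2 ∂μ) * p := fun p => by
    rw [← Finset.sum_mul, hv, one_mul]
  rw [key (∫ ω, steinD z (∑ j, ξ j ω) ∂μ), ← Finset.sum_sub_distrib]
  refine (Finset.abs_sum_le_sum_abs _ _).trans ?_
  rw [key (2 * (c + 8) * δ)]
  refine Finset.sum_le_sum fun i _ => ?_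
  set v := ∫ ω, ξ i ω ^ 2 ∂μ with hvi
  have hv0 : 0 ≤ v := integral_nonneg fun ω => sq_nonneg _
  set S := ∫ ω, smod z δ ((∑ j, ξ j ω) - ξ i ω) ∂μ with hS
  have b1 : |∫ ω, steinD z (∑ j, ξ j ω) ∂μ - ∫ ω, steinD z ((∑ j, ξ j ω) - ξ i ω) ∂μ| ≤ S := by
    rw [← integral_sub (intOK _) (intOK _)]
    refine abs_integral_le_integral_abs.trans ?_
    apply integral_mono (intOK _) (intOK _)
    intro ω
    apply steinD_diff
    simpa using hδ i ω
  have b2 := be_indep hind i (steinD_meas z) (G := fun x => x ^ 2) (by fun_prop)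
  have b3 := be_indep hind i hmm (G := fun x => x ^ 2) (by fun_prop)
  have b4 : |∫ ω, ξ i ω * (stein z (∑ j, ξ j ω) - stein z ((∑ j, ξ j ω) - ξ i ω)) ∂μ -
      ∫ ω, ξ i ω ^ 2 * steinD z ((∑ j, ξ j ω) - ξ i ω) ∂μ| ≤ v * S := by
    rw [← b3, ← integral_sub (intOK _) (intOK _)]
    refine abs_integral_le_integral_abs.trans ?_
    apply integral_mono (intOK _) (intOK _)
    intro ω
    simp only
    have := stein_taylor z (w := (∑ j, ξ j ω) - ξ i ω) (hδ i ω)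
    rw [sub_add_cancel] at this
    calc _ = |ξ i ω * (stein z (∑ j, ξ j ω) - stein z ((∑ j, ξ j ω) - ξ i ω)
            - ξ i ω * steinD z ((∑ j, ξ j ω) - ξ i ω))| := by congr 1; ring
      _ ≤ |ξ i ω| * (|ξ i ω| * smod z δ ((∑ j, ξ j ω) - ξ i ω)) := by
          rw [abs_mul]; gcongr
      _ = _ := by rw [← mul_assoc, ← pow_two, sq_abs]
  rw [b2] at b4
  have b5 : |v * (∫ ω, steinD z (∑ j, ξ j ω) ∂μ) -
      v * ∫ ω, steinD z ((∑ j, ξ j ω) - ξ i ω) ∂μ| ≤ v * S := by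
    rw [← mul_sub, abs_mul, abs_of_nonneg hv0]
    gcongr
  have b6 : v * S ≤ v * ((c + 8) * δ) := by gcongr; exact hmod i
  have b4' := abs_le.1 b4
  have b5' := abs_le.1 b5
  rw [abs_le]
  constructor <;> linarith

end BE

section seqBE

lemma expect_const (P : X → ℝ) (h : IsDist P) (c : ℝ) : expect P (fun _ => c) = c := by
  unfold expect; rw [← Finset.sum_mul, h.2, one_mul]

lemma varD_nonneg (P : X → ℝ) (h : IsDist P) (f : X → ℝ) : 0 ≤ varD P f :=
  Finset.sum_nonneg fun x _ => mul_nonneg (h.1 x) (sq_nonneg _)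

lemma expect_le (P : X → ℝ) (h : IsDist P) {f : X → ℝ} {B : ℝ} (hB : ∀ x, |f x| ≤ B) :
    |expect P f| ≤ B := by
  unfold expect
  refine (Finset.abs_sum_le_sum_abs _ _).trans ?_
  calc _ ≤ ∑ x, P x * B := by
        refine Finset.sum_le_sum fun x _ => ?_
        rw [abs_mul, abs_of_nonneg (h.1 x)]
        exact mul_le_mul_of_nonneg_left (hB x) (h.1 x)
    _ = B := expect_const P h B

lemma distMeasure_exists [MeasurableSpace X] [MeasurableSingletonClass X]
    (P : X → ℝ) (h : IsDist P) : ∃ μ : Measure X, IsProbabilityMeasure μ ∧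
    ∀ x, μ {x} = ENNReal.ofReal (P x) := by
  have hs : ∑ x, ENNReal.ofReal (P x) = 1 := by
    rw [← ENNReal.ofReal_sum_of_nonneg (fun x _ => h.1 x), h.2, ENNReal.ofReal_one]
  refine ⟨(PMF.ofFintype (fun x => ENNReal.ofReal (P x)) hs).toMeasure, inferInstance, fun x => ?_⟩
  rw [PMF.toMeasure_apply_singleton _ _ (measurableSet_singleton x)]
  simp

lemma gen_be {ι : Type*} [Fintype ι] [DecidableEq ι] (P : ι → X → ℝ) (hP : ∀ i, IsDist (P i))
    (u : ι → X → ℝ) {B : ℝ} (hB : ∀ i x, |u i x| ≤ B) {s : ℝ} (hs : 0 < s)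
    (hs2 : s ^ 2 = ∑ i, varD (P i) (u i)) (hBs : 2 * B ≤ s) (hB0 : 0 ≤ B) (v : ℝ) :
    |(∑ ω : ι → X, if ∑ i, u i (ω i) < v then ∏ i, P i (ω i) else 0) -
      stdCDF ((v - ∑ i, expect (P i) (u i)) / s)| ≤ 2 * ((gpdf 1)⁻¹ + 8) * (2 * B / s) := by
  let _ : MeasurableSpace X := ⊤
  have : DiscreteMeasurableSpace X := ⟨fun _ => trivial⟩
  choose ν hν hν1 using fun i => distMeasure_exists (P i) (hP i)
  have hνr : ∀ i x, (ν i).real {x} = P i x := by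
    intro i x
    rw [Measure.real, hν1, ENNReal.toReal_ofReal ((hP i).1 x)]
  set μ := Measure.pi ν with hμ
  have hμr : ∀ ω, μ.real {ω} = ∏ i, P i (ω i) := by
    intro ω
    rw [Measure.real, hμ, Measure.pi_singleton, ENNReal.toReal_prod]
    exact Finset.prod_congr rfl fun i _ => hνr i _
  have hint : ∀ i (f : X → ℝ), ∫ ω, f (ω i) ∂μ = expect (P i) f := by
    intro i f
    have h1 : ∫ ω, f (ω i) ∂μ = ∫ x, f x ∂(ν i) := by
      exact integral_comp_eval (μ := ν) (i := i) (f := f) Measurable.of_discrete.aestronglyMeasurable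
    rw [h1, integral_fintype Integrable.of_finite]
    unfold expect
    simp [hνr]
  set ξ : ι → (ι → X) → ℝ := fun i ω => (u i (ω i) - expect (P i) (u i)) / s with hξ
  have hind : ProbabilityTheory.iIndepFun ξ μ :=
    ProbabilityTheory.iIndepFun_pi (X := fun i x => (u i x - expect (P i) (u i)) / s)
      (fun i => Measurable.of_discrete.aemeasurable)
  have hm : ∀ i, ∫ ω, ξ i ω ∂μ = 0 := by
    intro i
    have h := hint i (fun x => (u i x - expect (P i) (u i)) / s)
    refine h.trans ?_
    have : expect (P i) (fun x => (u i x - expect (P i) (u i)) / s) =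
        (expect (P i) (u i) - expect (P i) (fun _ => expect (P i) (u i))) / s := by
      unfold expect
      rw [← Finset.sum_sub_distrib, Finset.sum_div]
      refine Finset.sum_congr rfl fun x _ => ?_
      ring
    rw [this, expect_const _ (hP i)]; simp
  have hv : ∑ i, ∫ ω, ξ i ω ^ 2 ∂μ = 1 := by
    have : ∀ i, ∫ ω, ξ i ω ^ 2 ∂μ = varD (P i) (u i) / s ^ 2 := by
      intro i
      have h := hint i (fun x => ((u i x - expect (P i) (u i)) / s) ^ 2)
      refine h.trans ?_
      unfold varD expect
      rw [Finset.sum_div]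
      refine Finset.sum_congr rfl fun x _ => ?_
      simp only [div_pow]; ring
    simp_rw [this]
    rw [← Finset.sum_div, ← hs2]
    field_simp
  have hδ : ∀ i ω, |ξ i ω| ≤ 2 * B / s := by
    intro i ω
    simp only [hξ]
    rw [abs_div, abs_of_pos hs]
    gcongr
    refine (abs_sub _ _).trans ?_
    have := hB i (ω i)
    have := expect_le (P i) (hP i) (hB i)
    linarith
  have := berry_esseen hind hm hv (by positivity) ((div_le_one hs).2 hBs) hδ
    ((v - ∑ i, expect (P i) (u i)) / s)
  rw [integral_fintype Integrable.of_finite] at this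
  convert this using 4 with ω
  rw [hμr, smul_eq_mul]
  have e : (∑ j, ξ j ω < (v - ∑ i, expect (P i) (u i)) / s) ↔ ∑ i, u i (ω i) < v := by
    simp only [hξ]
    rw [← Finset.sum_div, div_lt_div_iff_of_pos_right hs, Finset.sum_sub_distrib]
    constructor <;> intro h <;> linarith
  simp only [e]
  split_ifs <;> simp

lemma seq_be {P1 P2 : X → ℝ} (h1 : IsDist P1) (h2 : IsDist P2) (u1 u2 : X → ℝ) {B : ℝ}
    (hB1 : ∀ x, |u1 x| ≤ B) (hB2 : ∀ x, |u2 x| ≤ B) (hB0 : 0 ≤ B) (N n : ℕ) {s : ℝ} (hs : 0 < s)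
    (hs2 : s ^ 2 = N * varD P1 u1 + n * varD P2 u2) (hBs : 2 * B ≤ s) (v : ℝ) :
    |(∑ x1 : Fin N → X, ∑ y : Fin n → X,
        if ∑ i, u1 (x1 i) + ∑ j, u2 (y j) < v then seqProb P1 x1 * seqProb P2 y else 0) -
      stdCDF ((v - (N * expect P1 u1 + n * expect P2 u2)) / s)| ≤
        2 * ((gpdf 1)⁻¹ + 8) * (2 * B / s) := by
  have := gen_be (ι := Fin N ⊕ Fin n) (Sum.elim (fun _ => P1) (fun _ => P2))
    (by rintro (i | i) <;> simpa) (Sum.elim (fun _ => u1) (fun _ => u2)) (B := B)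
    (by rintro (i | i) <;> simpa) hs (by simp [hs2]) hBs hB0 v
  convert this using 3
  · rw [← Fintype.sum_prod_type']
    refine (Fintype.sum_equiv (Equiv.sumArrowEquivProdArrow (Fin N) (Fin n) X) _ _ ?_).symm
    intro ω
    simp [seqProb, Equiv.sumArrowEquivProdArrow]
    rfl
  · simp

end seqBE

section coding

lemma sum_seqProb (q : X → ℝ) (m : ℕ) : ∑ x : Fin m → X, seqProb q x = (∑ a, q a) ^ m := by
  unfold seqProb
  rw [Fintype.sum_pow]

lemma seqProb_nonneg {P : X → ℝ} (h : IsDist P) {m : ℕ} (x : Fin m → X) : 0 ≤ seqProb P x :=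
  Finset.prod_nonneg fun i _ => h.1 _

lemma mix_isDist {P1 P2 : X → ℝ} {α : ℝ} (hα : 0 < α) (h1 : IsDist P1) (h2 : IsDist P2) :
    IsDist (mix P1 P2 α) := by
  constructor
  · intro x
    have := h1.1 x
    have := h2.1 x
    unfold mix; positivity
  · unfold mix
    rw [← Finset.sum_div, Finset.sum_add_distrib, ← Finset.mul_sum, h1.2, h2.2]
    field_simp
    ring

lemma exp_iDens1 {P1 P2 : X → ℝ} {α : ℝ} (hα : 0 < α) (h2 : IsDist P2) {x : X} (hx : 0 < P1 x) :
    Real.exp (iDens1 P1 P2 α x) = P1 x / mix P1 P2 α x := by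
  have := h2.1 x
  have h : 0 < α * P1 x + P2 x := by positivity
  unfold iDens1 mix
  rw [Real.exp_log (by positivity)]
  field_simp

lemma exp_iDens2 {P1 P2 : X → ℝ} {α : ℝ} (hα : 0 < α) (h1 : IsDist P1) {x : X} (hx : 0 < P2 x) :
    Real.exp (iDens2 P1 P2 α x) = P2 x / mix P1 P2 α x := by
  have := h1.1 x
  have h : 0 < α * P1 x + P2 x := by positivity
  unfold iDens2 mix
  rw [Real.exp_log (by positivity)]
  field_simp

/-- log-likelihood ratio statistic -/
noncomputable def stat (P1 P2 : X → ℝ) (α : ℝ) {N n : ℕ} (x1 : Fin N → X) (y : Fin n → X) : ℝ :=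
  ∑ i, iDens1 P1 P2 α (x1 i) + ∑ j, iDens2 P1 P2 α (y j)

/-- lower tail probability of the statistic -/
noncomputable def tailP (P1 P2 : X → ℝ) (α : ℝ) (N n : ℕ) (v : ℝ) : ℝ :=
  ∑ x1 : Fin N → X, ∑ y : Fin n → X,
    if stat P1 P2 α x1 y < v then seqProb P1 x1 * seqProb P2 y else 0

lemma sum_mid {A B' C' : Type*} [Fintype A] [Fintype B'] [Fintype C'] (b : B' → ℝ)
    (hb : ∑ x, b x = 1) (F : A → C' → ℝ) :
    ∑ x : A, ∑ y : B', ∑ z : C', b y * F x z = ∑ x : A, ∑ z : C', F x z := by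
  refine Finset.sum_congr rfl fun x _ => ?_
  simp_rw [← Finset.mul_sum]
  rw [← Finset.sum_mul, hb, one_mul]

lemma sum_seq_one {P : X → ℝ} (h : IsDist P) (m : ℕ) : ∑ x : Fin m → X, seqProb P x = 1 := by
  rw [sum_seqProb, h.2, one_pow]

lemma converse {P1 P2 : X → ℝ} {α : ℝ} (hα : 0 < α) (h1 : IsDist P1) (h2 : IsDist P2) {n : ℕ}
    (φ : BTest X α n) (v : ℝ) :
    tailP P1 P2 α (trainLen α n) n v ≤
      beta2 φ P1 P2 + Real.exp v * beta1 φ (mix P1 P2 α) P2 := by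
  have hM := mix_isDist hα h1 h2
  unfold tailP
  rw [← sum_mid _ (sum_seq_one h2 (trainLen α n))]
  unfold beta1 beta2
  simp_rw [Finset.mul_sum, ← Finset.sum_add_distrib]
  refine Finset.sum_le_sum fun x1 _ => Finset.sum_le_sum fun x2 _ => Finset.sum_le_sum fun y _ => ?_
  have a0 := seqProb_nonneg h1 x1
  have b0 := seqProb_nonneg h2 x2
  have c0 := seqProb_nonneg h2 y
  have d0 := seqProb_nonneg hM x1
  have e0 := seqProb_nonneg hM y
  have key : seqProb P1 x1 * seqProb P2 y ≤ Real.exp (stat P1 P2 α x1 y) *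
      (seqProb (mix P1 P2 α) x1 * seqProb (mix P1 P2 α) y) := by
    by_cases hs : (∀ i, P1 (x1 i) ≠ 0) ∧ ∀ j, P2 (y j) ≠ 0
    · have e1 : seqProb P1 x1 = Real.exp (∑ i, iDens1 P1 P2 α (x1 i)) *
          seqProb (mix P1 P2 α) x1 := by
        unfold seqProb
        rw [Real.exp_sum, ← Finset.prod_mul_distrib]
        refine Finset.prod_congr rfl fun i _ => ?_
        have hp : 0 < P1 (x1 i) := lt_of_le_of_ne (h1.1 _) (hs.1 i).symm
        have := h2.1 (x1 i)
        have hm : mix P1 P2 α (x1 i) ≠ 0 := by unfold mix; positivity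
        rw [exp_iDens1 hα h2 hp]
        field_simp
      have e2 : seqProb P2 y = Real.exp (∑ i, iDens2 P1 P2 α (y i)) *
          seqProb (mix P1 P2 α) y := by
        unfold seqProb
        rw [Real.exp_sum, ← Finset.prod_mul_distrib]
        refine Finset.prod_congr rfl fun i _ => ?_
        have hp : 0 < P2 (y i) := lt_of_le_of_ne (h2.1 _) (hs.2 i).symm
        have := h1.1 (y i)
        have hm : mix P1 P2 α (y i) ≠ 0 := by unfold mix; positivity
        rw [exp_iDens2 hα h1 hp]
        field_simp
      unfold stat
      rw [Real.exp_add, e1, e2]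
      apply le_of_eq; ring
    · have : seqProb P1 x1 * seqProb P2 y = 0 := by
        unfold seqProb
        rw [mul_eq_zero, Finset.prod_eq_zero_iff, Finset.prod_eq_zero_iff]
        by_contra hc
        push Not at hc
        exact hs ⟨fun i => hc.1 i (Finset.mem_univ _), fun i => hc.2 i (Finset.mem_univ _)⟩
      rw [this]; positivity
  cases hφ : φ x1 x2 y
  · simp only [Bool.false_eq_true, if_true, if_false]
    split_ifs
    · apply le_of_eq; ring
    · simp; positivity
  · simp only [Bool.true_eq_false, if_true, if_false]
    split_ifs with hlt
    · have : Real.exp (stat P1 P2 α x1 y) ≤ Real.exp v := Real.exp_le_exp.2 hlt.le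
      calc _ ≤ seqProb P2 x2 * (Real.exp v *
            (seqProb (mix P1 P2 α) x1 * seqProb (mix P1 P2 α) y)) := by
            exact mul_le_mul_of_nonneg_left
              (key.trans (mul_le_mul_of_nonneg_right this (by positivity))) b0
        _ = _ := by ring
    · simp; positivity

open Classical in
/-- threshold test -/
noncomputable def thr (P1 P2 : X → ℝ) (α : ℝ) (n : ℕ) (v : ℝ) : BTest X α n :=
  fun x1 _ y => decide (((∀ i, 0 < P1 (x1 i)) ∧ ∀ j, 0 < P2 (y j)) ∧ v ≤ stat P1 P2 α x1 y)

lemma thr_beta2 {P1 P2 : X → ℝ} {α : ℝ} (h1 : IsDist P1) (h2 : IsDist P2) {n : ℕ} (v : ℝ) :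
    beta2 (thr P1 P2 α n v) P1 P2 = tailP P1 P2 α (trainLen α n) n v := by
  unfold tailP
  rw [← sum_mid _ (sum_seq_one h2 (trainLen α n))]
  unfold beta2
  refine Finset.sum_congr rfl fun x1 _ => Finset.sum_congr rfl fun x2 _ =>
    Finset.sum_congr rfl fun y _ => ?_
  by_cases hs : (∀ i, 0 < P1 (x1 i)) ∧ ∀ j, 0 < P2 (y j)
  · simp only [thr, hs, decide_eq_false_iff_not, not_le]
    simp
    split_ifs <;> ring
  · have : seqProb P1 x1 = 0 ∨ seqProb P2 y = 0 := by
      unfold seqProb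
      rw [Finset.prod_eq_zero_iff, Finset.prod_eq_zero_iff]
      by_contra hc
      push Not at hc
      exact hs ⟨fun i => lt_of_le_of_ne (h1.1 _) (hc.1 i (Finset.mem_univ _)).symm,
        fun i => lt_of_le_of_ne (h2.1 _) (hc.2 i (Finset.mem_univ _)).symm⟩
    rcases this with h | h <;> simp [h]

lemma trainLen_ge (α : ℝ) (n : ℕ) : α * n ≤ trainLen α n := Nat.le_ceil _

lemma trainLen_le {α : ℝ} (hα : 0 < α) (n : ℕ) : (trainLen α n : ℝ) ≤ α * n + 1 :=
  (Nat.ceil_lt_add_one (by positivity)).le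

lemma thr_beta1 {P1 P2 : X → ℝ} {α : ℝ} (hα : 0 < α) (h1 : IsDist P1) (h2 : IsDist P2) {n : ℕ}
    (v : ℝ) {Q1 Q2 : X → ℝ} (hQ1 : IsDist Q1) (hQ2 : IsDist Q2) :
    beta1 (thr P1 P2 α n v) Q1 Q2 ≤ Real.exp (-v) * Real.exp ((1 + α) / α) := by
  set q1 : X → ℝ := fun x => Q1 x * (P1 x / mix P1 P2 α x) with hq1
  set q2 : X → ℝ := fun x => Q1 x * (P2 x / mix P1 P2 α x) with hq2
  have hM := mix_isDist hα h1 h2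
  have q10 : ∀ x, 0 ≤ q1 x := fun x => mul_nonneg (hQ1.1 x) (div_nonneg (h1.1 x) (hM.1 x))
  have q20 : ∀ x, 0 ≤ q2 x := fun x => mul_nonneg (hQ1.1 x) (div_nonneg (h2.1 x) (hM.1 x))
  set s1 := ∑ x, q1 x with hs1
  set s2 := ∑ x, q2 x with hs2
  have s10 : 0 ≤ s1 := Finset.sum_nonneg fun x _ => q10 x
  have s20 : 0 ≤ s2 := Finset.sum_nonneg fun x _ => q20 x
  have hs : α * s1 + s2 ≤ 1 + α := by
    rw [hs1, hs2, Finset.mul_sum, ← Finset.sum_add_distrib]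
    calc _ ≤ ∑ x, Q1 x * (1 + α) := by
          refine Finset.sum_le_sum fun x _ => ?_
          have : α * q1 x + q2 x = Q1 x * ((α * P1 x + P2 x) / mix P1 P2 α x) := by
            simp only [hq1, hq2]; ring
          rw [this]
          apply mul_le_mul_of_nonneg_left _ (hQ1.1 x)
          unfold mix
          by_cases h0 : α * P1 x + P2 x = 0
          · rw [h0]; simp; positivity
          · apply le_of_eq; field_simp
      _ = 1 + α := by rw [← Finset.sum_mul, hQ1.2, one_mul]
  have hfin : s1 ^ (trainLen α n) * s2 ^ n ≤ Real.exp ((1 + α) / α) := by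
    have e1 : s1 ^ (trainLen α n) ≤ Real.exp (trainLen α n * (s1 - 1)) := by
      rw [Real.exp_nat_mul]
      have := Real.add_one_le_exp (s1 - 1)
      gcongr
      linarith
    have e2 : s2 ^ n ≤ Real.exp (n * (s2 - 1)) := by
      rw [Real.exp_nat_mul]
      have := Real.add_one_le_exp (s2 - 1)
      gcongr
      linarith
    calc _ ≤ Real.exp (trainLen α n * (s1 - 1)) * Real.exp (n * (s2 - 1)) := by gcongr
      _ = Real.exp (trainLen α n * (s1 - 1) + n * (s2 - 1)) := (Real.exp_add _ _).symm
      _ ≤ _ := by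
        apply Real.exp_le_exp.2
        have f1 := trainLen_ge α n
        have f2 := trainLen_le hα n
        have f3 : s1 ≤ (1 + α) / α := by rw [le_div_iff₀ hα]; linarith
        have f4 : (0:ℝ) ≤ n := Nat.cast_nonneg n
        nlinarith [mul_nonneg f4 (sub_nonneg.2 hs), mul_nonneg s10 (sub_nonneg.2 f2),
          mul_nonneg s10 (sub_nonneg.2 f1)]
  have hle : beta1 (thr P1 P2 α n v) Q1 Q2 ≤ ∑ x1 : Fin (trainLen α n) → X,
      ∑ x2 : Fin (trainLen α n) → X, ∑ y : Fin n → X,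
        seqProb Q2 x2 * (Real.exp (-v) * (seqProb q1 x1 * seqProb q2 y)) := by
    unfold beta1
    refine Finset.sum_le_sum fun x1 _ => Finset.sum_le_sum fun x2 _ =>
      Finset.sum_le_sum fun y _ => ?_
    have b0 := seqProb_nonneg hQ2 x2
    have c1 : 0 ≤ seqProb q1 x1 := Finset.prod_nonneg fun i _ => q10 _
    have c2 : 0 ≤ seqProb q2 y := Finset.prod_nonneg fun i _ => q20 _
    split_ifs with h
    · simp only [thr, decide_eq_true_eq] at h
      obtain ⟨⟨ha, hb⟩, hv⟩ := h
      have e1 : seqProb q1 x1 = seqProb Q1 x1 * Real.exp (∑ i, iDens1 P1 P2 α (x1 i)) := by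
        unfold seqProb
        rw [Real.exp_sum, ← Finset.prod_mul_distrib]
        refine Finset.prod_congr rfl fun i _ => ?_
        rw [exp_iDens1 hα h2 (ha i)]
      have e2 : seqProb q2 y = seqProb Q1 y * Real.exp (∑ i, iDens2 P1 P2 α (y i)) := by
        unfold seqProb
        rw [Real.exp_sum, ← Finset.prod_mul_distrib]
        refine Finset.prod_congr rfl fun i _ => ?_
        rw [exp_iDens2 hα h1 (hb i)]
      have a1 := seqProb_nonneg hQ1 x1
      have a2 := seqProb_nonneg hQ1 y
      have e3 : Real.exp (-v) * (seqProb q1 x1 * seqProb q2 y) =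
          Real.exp (stat P1 P2 α x1 y - v) * (seqProb Q1 x1 * seqProb Q1 y) := by
        rw [e1, e2, sub_eq_add_neg, Real.exp_add]
        unfold stat
        rw [Real.exp_add]; ring
      have e4 : 1 ≤ Real.exp (stat P1 P2 α x1 y - v) := Real.one_le_exp (by linarith)
      rw [e3]
      calc _ = seqProb Q2 x2 * (1 * (seqProb Q1 x1 * seqProb Q1 y)) := by ring
        _ ≤ _ := by gcongr
    · positivity
  refine hle.trans ?_
  rw [sum_mid _ (sum_seq_one hQ2 _)]
  simp_rw [← Finset.mul_sum]
  rw [← Finset.sum_mul, sum_seqProb, sum_seqProb]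
  gcongr

end coding

lemma gpdf_lower (t x : ℝ) (hx : |x| ≤ |t| + 1) : gpdf (|t| + 1) ≤ gpdf x := by
  have : x ^ 2 ≤ (|t| + 1) ^ 2 := by
    rw [← sq_abs x]; gcongr
  unfold gpdf
  gcongr

lemma stdCDF_gap (a b c : ℝ) (hab : a ≤ b) (h : ∀ x ∈ Set.Icc a b, c ≤ gpdf x) :
    c * (b - a) ≤ stdCDF b - stdCDF a := by
  rw [stdCDF_sub]
  have h1 : ∫ t in a..b, c = c * (b - a) := by simp [mul_comm]
  rw [← h1]
  exact intervalIntegral.integral_mono_on hab (by simp)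
    (gpdf_cont.intervalIntegrable _ _) h

lemma stdCDF_down (t η : ℝ) (h0 : 0 ≤ η) (h1 : η ≤ 1) :
    stdCDF (t - η) ≤ stdCDF t - gpdf (|t| + 1) * η := by
  have := stdCDF_gap (t - η) t (gpdf (|t| + 1)) (by linarith) (fun x hx => gpdf_lower t x (by
    obtain ⟨ha, hb⟩ := hx
    have := neg_abs_le t
    have := le_abs_self t
    rw [abs_le]; constructor <;> linarith))
  ring_nf at this ⊢
  linarith

lemma stdCDF_up (t η : ℝ) (h0 : 0 ≤ η) (h1 : η ≤ 1) :
    stdCDF t + gpdf (|t| + 1) * η ≤ stdCDF (t + η) := by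
  have := stdCDF_gap t (t + η) (gpdf (|t| + 1)) (by linarith) (fun x hx => gpdf_lower t x (by
    obtain ⟨ha, hb⟩ := hx
    have := neg_abs_le t
    have := le_abs_self t
    rw [abs_le]; constructor <;> linarith))
  ring_nf at this ⊢
  linarith

lemma GJS_eq {P1 P2 : X → ℝ} {α : ℝ} :
    GJS P1 P2 α = α * expect P1 (iDens1 P1 P2 α) + expect P2 (iDens2 P1 P2 α) := by
  unfold GJS klDivR expect iDens1 iDens2 mix
  simp only [div_div_eq_mul_div, mul_comm (1 + α)]

set_option maxHeartbeats 1600000 in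
lemma tail_bounds {P1 P2 : X → ℝ} {α ε : ℝ} (hα : 0 < α) (hε : ε ∈ Set.Ioo (0 : ℝ) 1)
    (h1 : IsDist P1) (h2 : IsDist P2) (hV : 0 < disp P1 P2 α) :
    ∃ K : ℝ, ∃ n1 : ℕ, ∀ n : ℕ, n1 ≤ n →
      tailP P1 P2 α (trainLen α n) n
        (n * GJS P1 P2 α + √(n * disp P1 P2 α) * stdCDFInv ε - K) ≤ ε ∧
      ε + 1 / √n < tailP P1 P2 α (trainLen α n) n
        (n * GJS P1 P2 α + √(n * disp P1 P2 α) * stdCDFInv ε + K) := by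
  have ht := stdCDF_inv hε
  set t := stdCDFInv ε with htdef
  set E1 := expect P1 (iDens1 P1 P2 α) with hE1
  set E2 := expect P2 (iDens2 P1 P2 α) with hE2
  set V1 := varD P1 (iDens1 P1 P2 α) with hV1
  set V2 := varD P2 (iDens2 P1 P2 α) with hV2
  have hG : GJS P1 P2 α = α * E1 + E2 := GJS_eq
  have hVd : disp P1 P2 α = α * V1 + V2 := rfl
  set V := disp P1 P2 α with hVV
  set G := GJS P1 P2 α with hGG
  have hV10 : 0 ≤ V1 := varD_nonneg _ h1 _
  have hV20 : 0 ≤ V2 := varD_nonneg _ h2 _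
  set B : ℝ := ∑ x, (|iDens1 P1 P2 α x| + |iDens2 P1 P2 α x|) with hB
  have hB0 : 0 ≤ B := Finset.sum_nonneg fun x _ => by positivity
  have hBx : ∀ x, |iDens1 P1 P2 α x| + |iDens2 P1 P2 α x| ≤ B := fun x =>
    Finset.single_le_sum (f := fun x => |iDens1 P1 P2 α x| + |iDens2 P1 P2 α x|)
      (fun x _ => by positivity) (Finset.mem_univ x)
  have hB1 : ∀ x, |iDens1 P1 P2 α x| ≤ B := fun x => by
    linarith [hBx x, abs_nonneg (iDens2 P1 P2 α x)]
  have hB2 : ∀ x, |iDens2 P1 P2 α x| ≤ B := fun x => by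
    linarith [hBx x, abs_nonneg (iDens1 P1 P2 α x)]
  set c := gpdf (|t| + 1) with hc
  have hc0 : 0 < c := gpdf_pos _
  have hsV : 0 < √V := Real.sqrt_pos.2 hV
  have hg1 : 0 < gpdf 1 := gpdf_pos 1
  set D : ℝ := 2 * ((gpdf 1)⁻¹ + 8) * (2 * B / √V) with hD
  have hD0 : 0 ≤ D := by positivity
  set H : ℝ := (D + 2) / c with hH
  have hH0 : 0 ≤ H := by positivity
  set W : ℝ := V1 / √V with hW
  have hW0 : 0 ≤ W := by positivity
  refine ⟨|E1| + W * |t| + (√V + W) * H, ⌈max 1 (max (H ^ 2) ((2 * B / √V) ^ 2))⌉₊, ?_⟩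
  intro n hn
  have hn' : max 1 (max (H ^ 2) ((2 * B / √V) ^ 2)) ≤ (n : ℝ) := Nat.ceil_le.1 hn
  have hn1 : (1 : ℝ) ≤ n := (le_max_left _ _).trans hn'
  have hnH : H ^ 2 ≤ (n : ℝ) := ((le_max_left _ _).trans (le_max_right _ _)).trans hn'
  have hnB : (2 * B / √V) ^ 2 ≤ (n : ℝ) := ((le_max_right _ _).trans (le_max_right _ _)).trans hn'
  set N := trainLen α n with hN
  have hNge := trainLen_ge α n
  have hNle := trainLen_le hα n
  rw [← hN] at hNge hNle
  set r := √(n : ℝ) with hr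
  have hr1 : 1 ≤ r := Real.one_le_sqrt.2 hn1
  have hr0 : 0 < r := by linarith
  have hrH : H ≤ r := Real.le_sqrt_of_sq_le hnH
  have hrB : 2 * B / √V ≤ r := Real.le_sqrt_of_sq_le hnB
  have hrV : √(n * V) = r * √V := Real.sqrt_mul (by positivity) _
  set s := √(N * V1 + n * V2) with hs
  have hss : s ^ 2 = N * V1 + n * V2 := Real.sq_sqrt (by positivity)
  have hr2 : r ^ 2 = n := Real.sq_sqrt (by positivity)
  have hv2 : √V ^ 2 = V := Real.sq_sqrt hV.le
  have hsge : r * √V ≤ s := by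
    rw [← hrV]
    apply Real.sqrt_le_sqrt
    rw [hVd]
    linarith [mul_le_mul_of_nonneg_right hNge hV10]
  have hs2 : s ^ 2 ≤ n * V + V1 := by
    rw [hss, hVd]; linarith [mul_le_mul_of_nonneg_right hNle hV10]
  have hs0 : 0 < s := lt_of_lt_of_le (by positivity) hsge
  have hsle : s - r * √V ≤ W := by
    rw [hW, le_div_iff₀ hsV]
    have : (s - r * √V) * (s + r * √V) ≤ V1 := by
      have : (r * √V) ^ 2 = n * V := by rw [mul_pow, hr2, hv2]
      have e : (s - r * √V) * (s + r * √V) = s ^ 2 - (r * √V) ^ 2 := by ring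
      rw [e, this]; linarith
    refine le_trans ?_ this
    apply mul_le_mul_of_nonneg_left _ (by linarith)
    linarith [mul_le_mul_of_nonneg_right hr1 hsV.le]
  have hBs : 2 * B ≤ s := by
    rw [div_le_iff₀ hsV] at hrB
    linarith
  have hbe := fun v => seq_be h1 h2 (iDens1 P1 P2 α) (iDens2 P1 P2 α) hB1 hB2 hB0 N n hs0 hss hBs v
  have herr : 2 * ((gpdf 1)⁻¹ + 8) * (2 * B / s) ≤ D / r := by
    have : 2 * B / s ≤ 2 * B / (r * √V) := by gcongr
    calc _ ≤ 2 * ((gpdf 1)⁻¹ + 8) * (2 * B / (r * √V)) := by gcongr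
      _ = D / r := by rw [hD]; field_simp
  have hmean : |(N * E1 + n * E2) - n * G| ≤ |E1| := by
    have : (N * E1 + n * E2) - n * G = (N - α * n) * E1 := by rw [hG]; ring
    rw [this, abs_mul, abs_of_nonneg (by linarith)]
    linarith [mul_le_mul_of_nonneg_right (show (N : ℝ) - α * n ≤ 1 by linarith) (abs_nonneg E1)]
  obtain ⟨hm1, hm2⟩ := abs_le.1 hmean
  set η := H / r with hη
  have hη0 : 0 ≤ η := by positivity
  have hη1 : η ≤ 1 := (div_le_one hr0).2 hrH
  have hcη : c * η = D / r + 2 / r := by rw [hη, hH]; field_simp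
  have hsη : s * η ≤ (√V + W) * H := by
    have : s ≤ r * (√V + W) := by linarith [mul_le_mul_of_nonneg_right hr1 hW0]
    calc s * η ≤ (r * (√V + W)) * η := by gcongr
      _ = _ := by rw [hη]; field_simp
  have hst : |(s - r * √V) * t| ≤ W * |t| := by
    rw [abs_mul, abs_of_nonneg (by linarith)]
    gcongr
  obtain ⟨hst1, hst2⟩ := abs_le.1 hst
  have hmono := stdCDF_mono
  have h1r : 0 < 1 / r := by positivity
  have h2r : 2 / r = 2 * (1 / r) := by ring
  rw [hrV]
  constructor
  · have hb := hbe (n * G + r * √V * t - (|E1| + W * |t| + (√V + W) * H))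
    have hb2 := (abs_le.1 hb).2
    have hle : (n * G + r * √V * t - (|E1| + W * |t| + (√V + W) * H) - (N * E1 + n * E2)) / s
        ≤ t - η := by
      rw [div_le_iff₀ hs0]; linarith
    have h3 := hmono hle
    have h4 := stdCDF_down t η hη0 hη1
    unfold tailP stat
    rw [← hc, hcη, ht] at h4
    linarith
  · have hb := hbe (n * G + r * √V * t + (|E1| + W * |t| + (√V + W) * H))
    have hb2 := (abs_le.1 hb).1
    have hle : t + η ≤
        (n * G + r * √V * t + (|E1| + W * |t| + (√V + W) * H) - (N * E1 + n * E2)) / s := by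
      rw [le_div_iff₀ hs0]; linarith
    have h3 := hmono hle
    have h4 := stdCDF_up t η hη0 hη1
    unfold tailP stat
    rw [← hc, hcη, ht] at h4
    linarith

lemma tailP_mono {P1 P2 : X → ℝ} {α : ℝ} (h1 : IsDist P1) (h2 : IsDist P2) (N n : ℕ) :
    Monotone (tailP P1 P2 α N n) := by
  intro v w hvw
  unfold tailP
  refine Finset.sum_le_sum fun x1 _ => Finset.sum_le_sum fun y _ => ?_
  have := mul_nonneg (seqProb_nonneg h1 x1) (seqProb_nonneg h2 y)
  split_ifs with ha hb
  · exact le_rfl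
  · exact absurd (ha.trans_le hvw) hb
  · exact this
  · exact le_rfl

lemma zero_mem {P1 P2 : X → ℝ} {α ε : ℝ} (hε : 0 ≤ ε) (n : ℕ) :
    (0 : ℝ) ∈ {lam : ℝ | 0 ≤ lam ∧ ∃ φ : BTest X α n,
    (∀ Q1 Q2 : X → ℝ, IsDist Q1 → IsDist Q2 →
      beta1 φ Q1 Q2 ≤ Real.exp (-((n : ℝ) * lam))) ∧
    beta2 φ P1 P2 ≤ ε} := by
  refine ⟨le_rfl, fun _ _ _ => true, ?_, ?_⟩
  · intro Q1 Q2 hQ1 hQ2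
    unfold beta1
    have : ∀ (x1 x2 : Fin (trainLen α n) → X) (y : Fin n → X),
      seqProb Q1 x1 * seqProb Q2 x2 * seqProb Q1 y =
        seqProb Q2 x2 * (seqProb Q1 x1 * seqProb Q1 y) := fun _ _ _ => by ring
    simp only [if_true, this]
    rw [sum_mid _ (sum_seq_one hQ2 _)]
    simp_rw [← Finset.mul_sum]
    rw [← Finset.sum_mul, sum_seq_one hQ1, sum_seq_one hQ1]
    simp
  · unfold beta2
    simpa using hε

lemma main_aux (α ε : ℝ) (hα : 0 < α) (hε : ε ∈ Set.Ioo (0 : ℝ) 1)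
    (P1 P2 : X → ℝ) (h1 : IsDist P1) (h2 : IsDist P2)
    (hV : 0 < disp P1 P2 α) :
    ∃ C > (0 : ℝ), ∃ n0 : ℕ, ∀ n ≥ n0,
      |lamStar α n ε P1 P2 - GJS P1 P2 α -
        Real.sqrt (disp P1 P2 α / n) * stdCDFInv ε| ≤ C * Real.log n / n := by
  obtain ⟨K, n1, hK⟩ := tail_bounds hα hε h1 h2 hV
  set G := GJS P1 P2 α
  set V := disp P1 P2 α
  set t := stdCDFInv ε
  set K' := |K| + (1 + α) / α with hK'
  refine ⟨2, by norm_num, max (max n1 1) ⌈Real.exp K'⌉₊, ?_⟩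
  intro n hn
  have hn1 : n1 ≤ n := ((le_max_left _ _).trans (le_max_left _ _)).trans hn
  have hnone : 1 ≤ n := ((le_max_right _ _).trans (le_max_left _ _)).trans hn
  have hnK : Real.exp K' ≤ n := Nat.ceil_le.1 ((le_max_right _ _).trans hn)
  have hnpos : (0 : ℝ) < n := by exact_mod_cast hnone
  have hlog : K' ≤ Real.log n := (Real.le_log_iff_exp_le hnpos).2 hnK
  obtain ⟨ha, hb⟩ := hK n hn1
  have hsq : n * √(V / n) = √(n * V) := by
    have : n * V = n ^ 2 * (V / n) := by field_simp
    rw [this, Real.sqrt_mul (by positivity), Real.sqrt_sq hnpos.le]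
  have hα' : 0 < (1 + α) / α := by positivity
  have hKa := le_abs_self K
  have hKa' := abs_nonneg K
  set S := {lam : ℝ | 0 ≤ lam ∧ ∃ φ : BTest X α n,
    (∀ Q1 Q2 : X → ℝ, IsDist Q1 → IsDist Q2 →
      beta1 φ Q1 Q2 ≤ Real.exp (-((n : ℝ) * lam))) ∧
    beta2 φ P1 P2 ≤ ε} with hS
  have hlam : lamStar α n ε P1 P2 = sSup S := rfl
  have h0S : (0 : ℝ) ∈ S := zero_mem hε.1.le n
  have hup : ∀ lam ∈ S, lam ≤ G + √(V / n) * t + 2 * Real.log n / n := by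
    rintro lam ⟨hl0, φ, hφ1, hφ2⟩
    by_contra hcon
    push Not at hcon
    have hmul : n * (G + √(V / n) * t + 2 * Real.log n / n) < n * lam :=
      mul_lt_mul_of_pos_left hcon hnpos
    have hexp : n * (G + √(V / n) * t + 2 * Real.log n / n) =
        n * G + √(n * V) * t + 2 * Real.log n := by
      rw [← hsq]; field_simp
    rw [hexp] at hmul
    have hc := converse hα h1 h2 φ (n * lam - Real.log n / 2)
    have hm := tailP_mono (α := α) h1 h2 (trainLen α n) n
      (show n * G + √(n * V) * t + K ≤ n * lam - Real.log n / 2 by linarith)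
    have hbeta := hφ1 _ _ (mix_isDist hα h1 h2) h2
    have : Real.exp (n * lam - Real.log n / 2) * beta1 φ (mix P1 P2 α) P2 ≤ 1 / √n := by
      calc _ ≤ Real.exp (n * lam - Real.log n / 2) * Real.exp (-((n : ℝ) * lam)) := by gcongr
        _ = Real.exp (-(Real.log n / 2)) := by rw [← Real.exp_add]; congr 1; ring
        _ = 1 / √n := by
          rw [Real.exp_neg, Real.exp_half, Real.exp_log hnpos, one_div]
    linarith
  have hbdd : BddAbove S := ⟨_, hup⟩
  have hu : lamStar α n ε P1 P2 ≤ G + √(V / n) * t + 2 * Real.log n / n :=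
    hlam ▸ csSup_le ⟨0, h0S⟩ hup
  have hl : G + √(V / n) * t - 2 * Real.log n / n ≤ lamStar α n ε P1 P2 := by
    rw [hlam]
    by_cases hneg : G + √(V / n) * t - 2 * Real.log n / n < 0
    · exact hneg.le.trans (le_csSup hbdd h0S)
    push Not at hneg
    apply le_csSup hbdd
    have hexp : n * (G + √(V / n) * t - 2 * Real.log n / n) =
        n * G + √(n * V) * t - 2 * Real.log n := by
      rw [← hsq]; field_simp
    refine ⟨hneg, thr P1 P2 α n (n * G + √(n * V) * t - 2 * Real.log n + (1 + α) / α), ?_, ?_⟩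
    · intro Q1 Q2 hQ1 hQ2
      refine (thr_beta1 hα h1 h2 _ hQ1 hQ2).trans ?_
      rw [hexp, ← Real.exp_add]
      apply le_of_eq; congr 1; ring
    · rw [thr_beta2 h1 h2]
      exact (tailP_mono (α := α) h1 h2 (trainLen α n) n (by linarith)).trans ha
  rw [abs_le]
  constructor <;> linarith


/-- Theorem 2 of the paper: second-order asymptotics of binary
classification: `λ*(n,α,ε|P1,P2) = GJS(P1,P2,α) + sqrt(V(P1,P2,α)/n) Φ⁻¹(ε) + O(log n / n)`. -/
theorem lamStar_second_order {X : Type*} [Fintype X] [DecidableEq X]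
    (α ε : ℝ) (hα : 0 < α) (hε : ε ∈ Set.Ioo (0 : ℝ) 1)
    (P1 P2 : X → ℝ) (h1 : IsDist P1) (h2 : IsDist P2)
    (hV : 0 < disp P1 P2 α) :
    ∃ C > (0 : ℝ), ∃ n0 : ℕ, ∀ n ≥ n0,
      |lamStar α n ε P1 P2 - GJS P1 P2 α -
        Real.sqrt (disp P1 P2 α / n) * stdCDFInv ε| ≤ C * Real.log n / n := by
  exact main_aux α ε hα hε P1 P2 h1 h2 hV

end Classification
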